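/- Let q be a complex number with |q| < 1 and let a, b, c, d, e be complex numbers (with all the denominators below nonzero and |q²a²/(bcde)| small enough that the series converge absolutely). Then Σ_{n=0}^∞ [(1 - a q^{2n})/(1 - a)] · [(a; q)_n (b; q)_n (c; q)_n (d; q)_n (e; q)_n / ((q; q)_n (qa/b; q)_n (qa/c; q)_n (qa/d; q)_n (qa/e; q)_n)] (-q²a²/(bcde))^n q^{n(n-1)/2} = [(qa; q)_∞ (qa/(de); q)_∞ / ((qa/d; q)_∞ (qa/e; q)_∞)] · Σ_{m=0}^∞ [(qa/(bc); q)_m (d; q)_m (e; q)_m / ((q; q)_m (qa/b; q)_m (qa/c; q)_m)] (qa/(de))^m. -/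

import Mathlib

open Complex MeasureTheory

/-- The q-shifted factorial `(x; q)_∞ = ∏_{k=0}^∞ (1 - x q^k)`. -/
noncomputable def qp (q x : ℂ) : ℂ := ∏' k : ℕ, (1 - x * q ^ k)

/-- The finite q-shifted factorial `(x; q)_n = ∏_{k=0}^{n-1} (1 - x q^k)`. -/
noncomputable def qpn (q x : ℂ) (n : ℕ) : ℂ := ∏ k ∈ Finset.range n, (1 - x * q ^ k)

/-- For `x = cos θ`, `h(x; λ) = (λ e^{iθ}; q)_∞ (λ e^{-iθ}; q)_∞`. -/
noncomputable def hh (q : ℂ) (θ : ℝ) (l : ℂ) : ℂ :=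
  qp q (l * Complex.exp ((θ : ℂ) * Complex.I)) *
    qp q (l * Complex.exp (-((θ : ℂ) * Complex.I)))

/-!
The left-hand side is one side of Bailey's lemma. A sequence `β` determines a sequence `α` by a
finite sum, and inserting that sum into the `α` side of the lemma and interchanging the two
summations leaves, for each fixed term of `β`, an inner very-well-poised `₆φ₅` series with one
parameter at infinity. Under `z ↦ z * q` that series satisfies a first-order recurrence, obtained
by telescoping, and iterating it expresses the sum as a quotient of infinite products. For the `β`
of the right-hand side, the finite sum defining `α` is a terminating balanced `₃φ₂`, which the
`q`-Pfaff–Saalschütz formula evaluates.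
-/

section

open Filter Finset Topology

theorem pow_succ_choose_two {M : Type*} [Monoid M] (q : M) (n : ℕ) :
    q ^ (n + 1).choose 2 = q ^ n.choose 2 * q ^ n := by
  rw [← pow_add, Nat.choose_succ_succ' n 1, Nat.choose_one_right, add_comm]

theorem qpn_zero (q x : ℂ) : qpn q x 0 = 1 := prod_range_zero _

theorem qpn_succ (q x : ℂ) (n : ℕ) : qpn q x (n + 1) = qpn q x n * (1 - x * q ^ n) :=
  prod_range_succ _ _

theorem qpn_add (q x : ℂ) (m n : ℕ) : qpn q x (m + n) = qpn q x m * qpn q (x * q ^ m) n := by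
  simp only [qpn, prod_range_add, pow_add, mul_assoc]

theorem qpn_succ' (q x : ℂ) (n : ℕ) : qpn q x (n + 1) = (1 - x) * qpn q (x * q) n := by
  simp [add_comm n, qpn_add, qpn_succ, qpn_zero]

theorem one_sub_mul_pow_ne_zero {q x : ℂ} (hx : ∀ n, qpn q x n ≠ 0) (n : ℕ) :
    1 - x * q ^ n ≠ 0 :=
  right_ne_zero_of_mul (qpn_succ q x n ▸ hx (n + 1))

theorem qpn_mul_pow_ne_zero {q x : ℂ} (hx : ∀ n, qpn q x n ≠ 0) (m n : ℕ) :
    qpn q (x * q ^ m) n ≠ 0 :=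
  right_ne_zero_of_mul (qpn_add q x m n ▸ hx (m + n))

theorem qpn_mul_pow_mul_ne_zero {q z x : ℂ} (hx : ∀ n, qpn q (z * x) n ≠ 0) (m n : ℕ) :
    qpn q (z * q ^ m * x) n ≠ 0 := by
  simpa only [mul_right_comm] using qpn_mul_pow_ne_zero hx m n

theorem qpn_self_ne_zero {q : ℂ} (hq : ‖q‖ < 1) (n : ℕ) : qpn q q n ≠ 0 := by
  refine prod_ne_zero_iff.mpr fun k _ h => ?_
  have hpow : ‖q‖ ^ (k + 1) = 1 := by rw [← norm_pow, pow_succ', ← sub_eq_zero.mp h, norm_one]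
  exact (pow_lt_one₀ (norm_nonneg q) hq k.succ_ne_zero).ne hpow

theorem qpn_reverse {q x y : ℂ} {n : ℕ} (hq : q ≠ 0) (hxy : x * y * q ^ n = q) :
    qpn q x n = (-x) ^ n * q ^ n.choose 2 * qpn q y n := by
  have hprod : (-x) ^ n * q ^ n.choose 2 = ∏ k ∈ range n, -x * q ^ k := by
    rw [prod_mul_distrib, prod_const, card_range, prod_pow_eq_pow_sum, sum_range_id,
      Nat.choose_two_right]
  rw [hprod, qpn, qpn, ← prod_range_reflect (fun k => 1 - y * q ^ k) n, ← prod_mul_distrib]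
  refine prod_congr rfl fun k hk => ?_
  have hexp : k + (n - 1 - k) + 1 = n := by have := mem_range.mp hk; omega
  have hone : x * y * (q ^ k * q ^ (n - 1 - k)) = 1 := by
    refine mul_right_cancel₀ hq ?_
    rw [one_mul, ← pow_add, mul_assoc, ← pow_succ, hexp, hxy]
  linear_combination -hone

theorem sum_antidiagonal_succ_of_pascal {M : Type*} [AddCommMonoid M] {t u v : ℕ → ℕ → M}
    (hleft : ∀ k, t 0 (k + 1) = v 0 k) (hright : ∀ j, t (j + 1) 0 = u j 0)
    (hinner : ∀ j k, t (j + 1) (k + 1) = u j (k + 1) + v (j + 1) k) (n : ℕ) :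
    ∑ p ∈ antidiagonal (n + 1), t p.1 p.2 = ∑ p ∈ antidiagonal n, (u p.1 p.2 + v p.1 p.2) := by
  cases n with
  | zero => simp [Nat.sum_antidiagonal_succ, hleft, hright, add_comm]
  | succ n =>
    rw [Nat.sum_antidiagonal_succ, Nat.sum_antidiagonal_succ', sum_add_distrib,
      Nat.sum_antidiagonal_succ' (f := fun p => u p.1 p.2),
      Nat.sum_antidiagonal_succ (f := fun p => v p.1 p.2)]
    simp only [hleft, hright, hinner, sum_add_distrib]
    abel

/-- The `j`-th term of the terminating balanced `₃φ₂` series with `n = j + k`, multiplied through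
by the denominators that depend on the parameters, so that the only quotient left is the
`q`-binomial coefficient of `n` over `j`. -/
noncomputable def saalschutzTerm (q A B x : ℂ) (j k : ℕ) : ℂ :=
  qpn q q (j + k) / (qpn q q j * qpn q q k) * (qpn q A j * qpn q B j * x ^ j) *
    (qpn q x k * qpn q (A * B * x * q ^ j) k)

section Saalschutz

variable {q : ℂ}

theorem saalschutzTerm_zero_succ (hq : ∀ n, qpn q q n ≠ 0) (A B x : ℂ) (k : ℕ) :
    saalschutzTerm q A B x 0 (k + 1) =
      (1 - x * q ^ k) * (1 - A * B * x * q ^ k) * saalschutzTerm q A B x 0 k := by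
  have := hq k
  have := hq (k + 1)
  simp only [saalschutzTerm, zero_add, qpn_zero, pow_zero, mul_one, one_mul, qpn_succ _ x,
    qpn_succ _ (A * B * x)]
  field_simp

theorem saalschutzTerm_succ_zero (hq : ∀ n, qpn q q n ≠ 0) (A B x : ℂ) (j : ℕ) :
    saalschutzTerm q A B x (j + 1) 0 =
      x * (1 - A * q ^ j) * (1 - B * q ^ j) * saalschutzTerm q A B x j 0 := by
  have := hq j
  have := hq (j + 1)
  simp only [saalschutzTerm, add_zero, qpn_zero, mul_one, qpn_succ _ A, qpn_succ _ B, pow_succ]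
  field_simp

theorem saalschutzTerm_succ_succ (hq : ∀ n, qpn q q n ≠ 0) (A B x : ℂ) (j k : ℕ) :
    saalschutzTerm q A B x (j + 1) (k + 1) =
      q ^ (k + 1) * x * (1 - A * q ^ j) * (1 - B * q ^ j) * saalschutzTerm q A B x j (k + 1) +
        (1 - x * q ^ k) * (1 - A * B * x * q ^ (2 * (j + 1) + k)) *
          saalschutzTerm q A B x (j + 1) k := by
  have hj := hq j
  have hk := hq k
  have hj' := one_sub_mul_pow_ne_zero hq j
  have hk' := one_sub_mul_pow_ne_zero hq k
  have hcons : qpn q (A * B * x * q ^ j) (k + 1) =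
      (1 - A * B * x * q ^ j) * qpn q (A * B * x * q ^ (j + 1)) k := by
    rw [qpn_succ', pow_succ, ← mul_assoc]
  simp only [saalschutzTerm]
  rw [hcons, show j + 1 + (k + 1) = j + k + 1 + 1 by ring, show j + (k + 1) = j + k + 1 by ring,
    show j + 1 + k = j + k + 1 by ring, qpn_succ q q (j + k + 1), qpn_succ q q j, qpn_succ q q k,
    qpn_succ q A, qpn_succ q B, qpn_succ q x, qpn_succ q (A * B * x * q ^ (j + 1))]
  generalize qpn q (A * B * x * q ^ (j + 1)) k = C, qpn q q (j + k + 1) = F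
  field_simp
  ring

/-- The `q`-Pfaff–Saalschütz summation. -/
theorem sum_saalschutzTerm (hq : ∀ n, qpn q q n ≠ 0) (A B x : ℂ) (n : ℕ) :
    ∑ p ∈ antidiagonal n, saalschutzTerm q A B x p.1 p.2 =
      qpn q (A * x) n * qpn q (B * x) n := by
  induction n with
  | zero => simp [saalschutzTerm, qpn_zero]
  | succ n ih =>
    have hpascal := sum_antidiagonal_succ_of_pascal
      (t := saalschutzTerm q A B x)
      (u := fun j k => q ^ k * x * (1 - A * q ^ j) * (1 - B * q ^ j) * saalschutzTerm q A B x j k)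
      (v := fun j k => (1 - x * q ^ k) * (1 - A * B * x * q ^ (2 * j + k)) *
        saalschutzTerm q A B x j k)
      (fun k => by simpa using saalschutzTerm_zero_succ hq A B x k)
      (fun j => by simpa using saalschutzTerm_succ_zero hq A B x j)
      (saalschutzTerm_succ_succ hq A B x) n
    rw [hpascal, qpn_succ, qpn_succ, mul_mul_mul_comm, ← ih, sum_mul]
    refine sum_congr rfl fun p hp => ?_
    rw [← mem_antidiagonal.mp hp]
    ring

end Saalschutz

theorem norm_qpn_le {q : ℂ} (hq : ‖q‖ < 1) (x : ℂ) (n : ℕ) :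
    ‖qpn q x n‖ ≤ Real.exp (‖x‖ * (1 - ‖q‖)⁻¹) := by
  have hgeom := summable_geometric_of_lt_one (norm_nonneg q) hq
  calc ‖qpn q x n‖ ≤ ∏ k ∈ range n, (1 + ‖x‖ * ‖q‖ ^ k) := by
        rw [qpn, norm_prod]
        refine prod_le_prod (fun _ _ => norm_nonneg _) fun k _ => ?_
        simpa using norm_sub_le 1 (x * q ^ k)
    _ ≤ Real.exp (∑ k ∈ range n, ‖x‖ * ‖q‖ ^ k) :=
        Real.prod_one_add_le_exp_sum _ fun k => by positivity
    _ ≤ Real.exp (‖x‖ * (1 - ‖q‖)⁻¹) := by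
        rw [← mul_sum, ← tsum_geometric_of_lt_one (norm_nonneg q) hq]
        gcongr
        exact hgeom.sum_le_tsum _ fun k _ => by positivity

theorem summable_norm_neg_mul_pow {q : ℂ} (hq : ‖q‖ < 1) (x : ℂ) :
    Summable fun k : ℕ => ‖-(x * q ^ k)‖ := by
  simpa using (summable_geometric_of_lt_one (norm_nonneg q) hq).mul_left ‖x‖

theorem tendsto_qpn {q : ℂ} (hq : ‖q‖ < 1) (x : ℂ) :
    Tendsto (qpn q x) atTop (𝓝 (qp q x)) := by
  simpa only [funext (qpn.eq_1 q x), qp, sub_eq_add_neg] using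
    (multipliable_one_add_of_summable (summable_norm_neg_mul_pow hq x)).hasProd.tendsto_prod_nat

theorem qp_eq_qpn_mul_qp {q : ℂ} (hq : ‖q‖ < 1) (x : ℂ) (n : ℕ) :
    qp q x = qpn q x n * qp q (x * q ^ n) := by
  refine tendsto_nhds_unique ((tendsto_add_atTop_iff_nat n).mpr (tendsto_qpn hq x)) ?_
  simpa only [add_comm _ n, qpn_add] using (tendsto_qpn hq (x * q ^ n)).const_mul (qpn q x n)

theorem qp_ne_zero {q x : ℂ} (hq : ‖q‖ < 1) (hx : ∀ n, qpn q x n ≠ 0) : qp q x ≠ 0 := by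
  simpa only [qp, sub_eq_add_neg] using tprod_one_add_ne_zero_of_summable
    (fun k => by simpa only [sub_eq_add_neg] using one_sub_mul_pow_ne_zero hx k)
    (summable_norm_neg_mul_pow hq x)

theorem exists_norm_inv_qpn_mul_pow_le {q x : ℂ} (hq : ‖q‖ < 1) (hx : ∀ n, qpn q x n ≠ 0) :
    ∃ C ≥ 0, ∀ m n, ‖(qpn q (x * q ^ m) n)⁻¹‖ ≤ C := by
  obtain ⟨B, hB⟩ := ((tendsto_qpn hq x).inv₀ (qp_ne_zero hq hx)).norm.bddAbove_range
  have hB0 : 0 ≤ B := (norm_nonneg _).trans (hB ⟨0, rfl⟩)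
  refine ⟨Real.exp (‖x‖ * (1 - ‖q‖)⁻¹) * B, by positivity, fun m n => ?_⟩
  have hsplit : (qpn q (x * q ^ m) n)⁻¹ = qpn q x m * (qpn q x (m + n))⁻¹ := by
    rw [qpn_add, mul_inv, mul_inv_cancel_left₀ (hx m)]
  rw [hsplit, norm_mul]
  gcongr
  · exact norm_qpn_le hq x m
  · exact hB ⟨m + n, rfl⟩

theorem summable_pow_mul_pow_choose_two {r : ℝ} (hr0 : 0 ≤ r) (hr : r < 1) (R : ℝ) :
    Summable fun k : ℕ => R ^ k * r ^ k.choose 2 := by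
  have hratio : Tendsto (fun k : ℕ => ‖R‖ * r ^ k) atTop (𝓝 0) := by
    simpa using (tendsto_pow_atTop_nhds_zero_of_lt_one hr0 hr).const_mul ‖R‖
  refine summable_of_ratio_norm_eventually_le one_half_lt_one ?_
  filter_upwards [hratio.eventually_le_const one_half_pos] with k hk
  calc ‖R ^ (k + 1) * r ^ (k + 1).choose 2‖ = ‖R‖ * r ^ k * ‖R ^ k * r ^ k.choose 2‖ := by
        rw [pow_succ_choose_two, pow_succ' R]
        simp only [norm_mul, norm_pow, Real.norm_of_nonneg hr0]
        ring
    _ ≤ 1 / 2 * ‖R ^ k * r ^ k.choose 2‖ := by gcongr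

theorem norm_mul_pow_le {q : ℂ} (hq : ‖q‖ < 1) (x : ℂ) (n : ℕ) : ‖x * q ^ n‖ ≤ ‖x‖ := by
  rw [norm_mul, norm_pow]
  exact mul_le_of_le_one_right (norm_nonneg x) (pow_le_one₀ (norm_nonneg q) hq.le)

/-- The very-well-poised factor `(1 - α q ^ (2 * k)) / (1 - α) * (α; q)_k` in terms of `y = α * q`,
with `1 - α` cancelled so that `α = 1` is allowed. -/
noncomputable def vwpFactor (q y : ℂ) : ℕ → ℂ
  | 0 => 1
  | k + 1 => (1 - y * q ^ (2 * k + 1)) * qpn q y k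

theorem one_sub_mul_vwpFactor (q y : ℂ) (k : ℕ) :
    (1 - y) * vwpFactor q (q * y) k = (1 - y * q ^ (2 * k)) * qpn q y k := by
  cases k with
  | zero => simp [vwpFactor, qpn_zero]
  | succ k =>
    rw [vwpFactor, qpn_succ', mul_comm q y]
    ring

theorem vwpFactor_add_mul_qpn (q a : ℂ) (j k : ℕ) :
    vwpFactor q (q * a) (j + k) * qpn q (a * q ^ (j + k)) j =
      qpn q (q * a) (2 * j) * vwpFactor q (q * a * q ^ (2 * j)) k := by
  rcases k with _ | k
  · rcases j with _ | j
    · simp [vwpFactor, qpn_zero]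
    · have hsplit := qpn_add q (q * a) j (j + 1)
      have hlast := qpn_succ q (q * a) (2 * j + 1)
      rw [show j + (j + 1) = 2 * j + 1 by ring, show q * a * q ^ j = a * q ^ (j + 1) by ring]
        at hsplit
      rw [show 2 * (j + 1) = 2 * j + 1 + 1 by ring, hlast, hsplit]
      simp only [vwpFactor, add_zero]
      ring
  · have hleft := qpn_add q (q * a) (j + k) j
    have hright := qpn_add q (q * a) (2 * j) k
    rw [show j + k + j = 2 * j + k by ring, hright,
      show q * a * q ^ (j + k) = a * q ^ (j + (k + 1)) by ring] at hleft
    rw [← add_assoc, vwpFactor, vwpFactor, add_assoc]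
    linear_combination -(1 - q * a * q ^ (2 * (j + k) + 1)) * hleft

theorem norm_vwpFactor_le {q : ℂ} (hq : ‖q‖ < 1) (y : ℂ) (k : ℕ) :
    ‖vwpFactor q y k‖ ≤ (1 + ‖y‖) * Real.exp (‖y‖ * (1 - ‖q‖)⁻¹) := by
  cases k with
  | zero =>
    rw [vwpFactor, norm_one]
    exact one_le_mul_of_one_le_of_one_le (le_add_of_nonneg_right (norm_nonneg y))
      (Real.one_le_exp (by positivity))
  | succ k =>
    rw [vwpFactor, norm_mul]
    gcongr
    · calc ‖1 - y * q ^ (2 * k + 1)‖ ≤ ‖(1 : ℂ)‖ + ‖y * q ^ (2 * k + 1)‖ := norm_sub_le _ _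
        _ ≤ 1 + ‖y‖ := by rw [norm_one]; gcongr; exact norm_mul_pow_le hq y _
    · exact norm_qpn_le hq y k

/-- The terms `vwpTerm` of the very-well-poised series without the factor `vwpFactor`; this is the
part whose quotients under `k ↦ k + 1` and `z ↦ z * q` are products of linear factors. -/
noncomputable def vwpWeight (q D E z : ℂ) (k : ℕ) : ℂ :=
  qpn q D k * qpn q E k / (qpn q q k * qpn q (z * D) k * qpn q (z * E) k) *
    ((-z) ^ k * q ^ k.choose 2)

/-- The terms of the very-well-poised `₆φ₅` series with parameters `α, D, E` and a further one
sent to infinity, where `α * q = z * D * E`. Taking `z` rather than `α` as the parameter removes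
all quotients of parameters: `α * q / D = z * E` and `α * q / E = z * D`. -/
noncomputable def vwpTerm (q D E z : ℂ) (k : ℕ) : ℂ :=
  vwpFactor q (z * D * E) k * vwpWeight q D E z k

/-- The sequence whose differences witness the recurrence of the very-well-poised series under
`z ↦ z * q`. -/
noncomputable def vwpFlux (q D E z : ℂ) (k : ℕ) : ℂ :=
  (q ^ k * qpn q (z * D * E) k - vwpFactor q (z * D * E) k) * vwpWeight q D E z k

section VeryWellPoised

variable {q D E z : ℂ}

theorem vwpWeight_succ (hq : ∀ n, qpn q q n ≠ 0)
    (hD : ∀ n, qpn q (z * D) n ≠ 0) (hE : ∀ n, qpn q (z * E) n ≠ 0) (k : ℕ) :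
    (1 - q * q ^ k) * ((1 - z * D * q ^ k) * (1 - z * E * q ^ k) * vwpWeight q D E z (k + 1)) =
      -(z * q ^ k * (1 - D * q ^ k) * (1 - E * q ^ k) * vwpWeight q D E z k) := by
  have hcancel {x : ℂ} (hx : ∀ n, qpn q x n ≠ 0) :
      (1 - x * q ^ k) / qpn q x (k + 1) = (qpn q x k)⁻¹ := by
    rw [qpn_succ, div_mul_cancel_right₀ (one_sub_mul_pow_ne_zero hx k)]
  calc _ = qpn q D (k + 1) * qpn q E (k + 1) * ((-z) ^ (k + 1) * q ^ (k + 1).choose 2) *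
        ((1 - q * q ^ k) / qpn q q (k + 1)) * ((1 - z * D * q ^ k) / qpn q (z * D) (k + 1)) *
        ((1 - z * E * q ^ k) / qpn q (z * E) (k + 1)) := by rw [vwpWeight]; ring
    _ = _ := by
      rw [hcancel hq, hcancel hD, hcancel hE, vwpWeight, qpn_succ, qpn_succ, pow_succ_choose_two]
      ring

theorem vwpWeight_mul_q (hD : ∀ n, qpn q (z * D) n ≠ 0) (hE : ∀ n, qpn q (z * E) n ≠ 0) (k : ℕ) :
    (1 - z * D * q ^ k) * (1 - z * E * q ^ k) * vwpWeight q D E (z * q) k =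
      (1 - z * D) * (1 - z * E) * (q ^ k * vwpWeight q D E z k) := by
  have hshift {x : ℂ} (hx : ∀ n, qpn q (z * x) n ≠ 0) :
      (1 - z * x * q ^ k) / qpn q (z * q * x) k = (1 - z * x) / qpn q (z * x) k := by
    have h := qpn_succ' q (z * x) k
    rw [qpn_succ, mul_right_comm z x q] at h
    have hne : qpn q (z * q * x) k ≠ 0 := by
      simpa using qpn_mul_pow_mul_ne_zero hx 1 k
    rw [div_eq_div_iff hne (hx k), mul_comm, h]
  calc _ = qpn q D k * qpn q E k / qpn q q k * ((-(z * q)) ^ k * q ^ k.choose 2) *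
        ((1 - z * D * q ^ k) / qpn q (z * q * D) k) *
        ((1 - z * E * q ^ k) / qpn q (z * q * E) k) := by rw [vwpWeight]; ring
    _ = _ := by rw [hshift hD, hshift hE, vwpWeight]; ring

theorem vwpTerm_sub_eq_vwpFlux_sub (hq : ∀ n, qpn q q n ≠ 0)
    (hD : ∀ n, qpn q (z * D) n ≠ 0) (hE : ∀ n, qpn q (z * E) n ≠ 0) (k : ℕ) :
    vwpTerm q D E z k -
        (1 - z * D * E) * (1 - z) / ((1 - z * D) * (1 - z * E)) * vwpTerm q D E (z * q) k =
      vwpFlux q D E z (k + 1) - vwpFlux q D E z k := by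
  have hD0 : 1 - z * D ≠ 0 := by simpa using one_sub_mul_pow_ne_zero hD 0
  have hE0 : 1 - z * E ≠ 0 := by simpa using one_sub_mul_pow_ne_zero hE 0
  have hDk := one_sub_mul_pow_ne_zero hD k
  have hEk := one_sub_mul_pow_ne_zero hE k
  have hfactor := one_sub_mul_vwpFactor q (z * D * E) k
  rw [show q * (z * D * E) = z * q * D * E by ring] at hfactor
  have hflux : (1 - z * D * q ^ k) * (1 - z * E * q ^ k) * vwpFlux q D E z (k + 1) =
      q ^ k * qpn q (z * D * E) k *
        (z * (1 - D * q ^ k) * (1 - E * q ^ k) * vwpWeight q D E z k) := by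
    rw [vwpFlux, vwpFactor, qpn_succ]
    linear_combination -qpn q (z * D * E) k * vwpWeight_succ hq hD hE k
  have hterm : (1 - z * D * q ^ k) * (1 - z * E * q ^ k) *
      ((1 - z * D * E) * (1 - z) / ((1 - z * D) * (1 - z * E)) * vwpTerm q D E (z * q) k) =
      q ^ k * qpn q (z * D * E) k *
        ((1 - z) * (1 - z * D * E * q ^ (2 * k)) * vwpWeight q D E z k) := by
    rw [vwpTerm, div_mul_eq_mul_div, mul_div_assoc', div_eq_iff (mul_ne_zero hD0 hE0)]
    linear_combination
      (1 - z) * (1 - z * D * E) * vwpFactor q (z * q * D * E) k * vwpWeight_mul_q hD hE k +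
        (1 - z) * (1 - z * D) * (1 - z * E) * q ^ k * vwpWeight q D E z k * hfactor
  refine mul_left_cancel₀ (mul_ne_zero hDk hEk) ?_
  -- With `K = q ^ k`, what remains is
  -- `(1 - z * D * K) * (1 - z * E * K) =
  --   (1 - z) * (1 - z * D * E * K ^ 2) + z * (1 - D * K) * (1 - E * K)`.
  rw [mul_sub (_ * _), mul_sub (_ * _), hterm, hflux, vwpTerm, vwpFlux]
  ring

theorem exists_norm_vwpWeight_le (hq : ‖q‖ < 1)
    (hD : ∀ n, qpn q (z * D) n ≠ 0) (hE : ∀ n, qpn q (z * E) n ≠ 0) :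
    ∃ C ≥ 0, ∀ i m k, ‖vwpWeight q (D * q ^ i) (E * q ^ i) (z * q ^ m) k‖ ≤
      C * (‖z * q ^ m‖ ^ k * ‖q‖ ^ k.choose 2) := by
  obtain ⟨Cq, hCq0, hCq⟩ := exists_norm_inv_qpn_mul_pow_le hq (qpn_self_ne_zero hq)
  obtain ⟨CD, hCD0, hCD⟩ := exists_norm_inv_qpn_mul_pow_le hq hD
  obtain ⟨CE, hCE0, hCE⟩ := exists_norm_inv_qpn_mul_pow_le hq hE
  have hnum (x : ℂ) (i k : ℕ) : ‖qpn q (x * q ^ i) k‖ ≤ Real.exp (‖x‖ * (1 - ‖q‖)⁻¹) :=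
    (norm_qpn_le hq _ k).trans (by gcongr; exact norm_mul_pow_le hq x i)
  have hshift (x : ℂ) (i m : ℕ) : z * q ^ m * (x * q ^ i) = z * x * q ^ (m + i) := by ring
  refine ⟨Real.exp (‖D‖ * (1 - ‖q‖)⁻¹) * Real.exp (‖E‖ * (1 - ‖q‖)⁻¹) * (Cq * CD * CE),
    by positivity, fun i m k => ?_⟩
  rw [vwpWeight, div_eq_mul_inv, mul_inv, mul_inv, hshift, hshift]
  rw [norm_mul, norm_mul, norm_mul, norm_mul, norm_mul, norm_mul, norm_pow, norm_neg, norm_pow q]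
  gcongr
  · exact hnum D i k
  · exact hnum E i k
  · simpa using hCq 0 k
  · exact hCD _ k
  · exact hCE _ k

theorem exists_norm_vwpTerm_le (hq : ‖q‖ < 1)
    (hD : ∀ n, qpn q (z * D) n ≠ 0) (hE : ∀ n, qpn q (z * E) n ≠ 0) :
    ∃ C ≥ 0, ∀ i m k, ‖vwpTerm q (D * q ^ i) (E * q ^ i) (z * q ^ m) k‖ ≤
      C * (‖z * q ^ m‖ ^ k * ‖q‖ ^ k.choose 2) := by
  obtain ⟨C, hC0, hC⟩ := exists_norm_vwpWeight_le hq hD hE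
  set y := z * D * E
  refine ⟨(1 + ‖y‖) * Real.exp (‖y‖ * (1 - ‖q‖)⁻¹) * C, by positivity, fun i m k => ?_⟩
  have hy : ‖z * q ^ m * (D * q ^ i) * (E * q ^ i)‖ ≤ ‖y‖ := by
    rw [show z * q ^ m * (D * q ^ i) * (E * q ^ i) = y * q ^ (m + i + i) by ring]
    exact norm_mul_pow_le hq y _
  rw [vwpTerm, norm_mul, mul_assoc (_ * Real.exp _)]
  refine mul_le_mul ((norm_vwpFactor_le hq _ k).trans ?_) (hC i m k) (norm_nonneg _)
    (by positivity)
  gcongr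

theorem summable_of_norm_le_mul_pow_mul_pow_choose_two {f : ℕ → ℂ} (hq : ‖q‖ < 1) {C : ℝ}
    (hf : ∀ k, ‖f k‖ ≤ C * (‖z‖ ^ k * ‖q‖ ^ k.choose 2)) : Summable f :=
  .of_norm_bounded ((summable_pow_mul_pow_choose_two (norm_nonneg q) hq ‖z‖).mul_left C) hf

theorem summable_vwpWeight (hq : ‖q‖ < 1)
    (hD : ∀ n, qpn q (z * D) n ≠ 0) (hE : ∀ n, qpn q (z * E) n ≠ 0) :
    Summable (vwpWeight q D E z) := by
  obtain ⟨C, -, hC⟩ := exists_norm_vwpWeight_le hq hD hE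
  exact summable_of_norm_le_mul_pow_mul_pow_choose_two hq fun k => by simpa using hC 0 0 k

theorem summable_vwpTerm (hq : ‖q‖ < 1)
    (hD : ∀ n, qpn q (z * D) n ≠ 0) (hE : ∀ n, qpn q (z * E) n ≠ 0) :
    Summable (vwpTerm q D E z) := by
  obtain ⟨C, -, hC⟩ := exists_norm_vwpTerm_le hq hD hE
  exact summable_of_norm_le_mul_pow_mul_pow_choose_two hq fun k => by simpa using hC 0 0 k

theorem tendsto_vwpFlux (hq : ‖q‖ < 1)
    (hD : ∀ n, qpn q (z * D) n ≠ 0) (hE : ∀ n, qpn q (z * E) n ≠ 0) :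
    Tendsto (vwpFlux q D E z) atTop (𝓝 0) := by
  have hbounded := (tendsto_pow_atTop_nhds_zero_of_norm_lt_one hq).mul
    (tendsto_qpn hq (z * D * E))
  have hweight := (summable_vwpWeight hq hD hE).tendsto_atTop_zero
  have hterm := (summable_vwpTerm hq hD hE).tendsto_atTop_zero
  simpa [funext (vwpFlux.eq_1 q D E z), vwpTerm, sub_mul] using (hbounded.mul hweight).sub hterm

theorem tsum_vwpTerm_eq_mul_tsum_vwpTerm_mul_q (hq : ‖q‖ < 1)
    (hD : ∀ n, qpn q (z * D) n ≠ 0) (hE : ∀ n, qpn q (z * E) n ≠ 0) :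
    ∑' k, vwpTerm q D E z k =
      (1 - z * D * E) * (1 - z) / ((1 - z * D) * (1 - z * E)) *
        ∑' k, vwpTerm q D E (z * q) k := by
  have hsum := (summable_vwpTerm hq hD hE).hasSum
  have hsum_mul_q : Summable (vwpTerm q D E (z * q)) := summable_vwpTerm hq
    (by simpa using qpn_mul_pow_mul_ne_zero hD 1) (by simpa using qpn_mul_pow_mul_ne_zero hE 1)
  have hpartial := (hsum.sub (hsum_mul_q.hasSum.mul_left
    ((1 - z * D * E) * (1 - z) / ((1 - z * D) * (1 - z * E))))).tendsto_sum_nat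
  simp only [vwpTerm_sub_eq_vwpFlux_sub (qpn_self_ne_zero hq) hD hE, sum_range_sub] at hpartial
  have hflux_zero : vwpFlux q D E z 0 = 0 := by simp [vwpFlux, vwpFactor, qpn_zero]
  rw [hflux_zero] at hpartial
  simp only [sub_zero] at hpartial
  exact sub_eq_zero.mp (tendsto_nhds_unique hpartial (tendsto_vwpFlux hq hD hE))

theorem tsum_vwpTerm_eq_mul_tsum_vwpTerm_mul_pow (hq : ‖q‖ < 1)
    (hD : ∀ n, qpn q (z * D) n ≠ 0) (hE : ∀ n, qpn q (z * E) n ≠ 0) (m : ℕ) :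
    ∑' k, vwpTerm q D E z k =
      qpn q (z * D * E) m * qpn q z m / (qpn q (z * D) m * qpn q (z * E) m) *
        ∑' k, vwpTerm q D E (z * q ^ m) k := by
  induction m with
  | zero => simp [qpn_zero]
  | succ m ih =>
    rw [ih, tsum_vwpTerm_eq_mul_tsum_vwpTerm_mul_q hq (qpn_mul_pow_mul_ne_zero hD m)
      (qpn_mul_pow_mul_ne_zero hE m), pow_succ, ← mul_assoc z, qpn_succ, qpn_succ, qpn_succ,
      qpn_succ, mul_right_comm z (q ^ m) D, mul_right_comm (z * D) (q ^ m) E,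
      mul_right_comm z (q ^ m) E, ← mul_assoc, div_mul_div_comm]
    ring

theorem tendsto_tsum_vwpTerm_mul_pow (hq : ‖q‖ < 1)
    (hD : ∀ n, qpn q (z * D) n ≠ 0) (hE : ∀ n, qpn q (z * E) n ≠ 0) :
    Tendsto (fun m => ∑' k, vwpTerm q D E (z * q ^ m) k) atTop (𝓝 1) := by
  obtain ⟨C, hC0, hC⟩ := exists_norm_vwpTerm_le hq hD hE
  have hbound (m k : ℕ) : ‖vwpTerm q D E (z * q ^ m) k‖ ≤
      C * (‖z * q ^ m‖ ^ k * ‖q‖ ^ k.choose 2) := by simpa using hC 0 m k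
  have harg : Tendsto (fun m : ℕ => ‖z * q ^ m‖) atTop (𝓝 0) := by
    simpa using ((tendsto_pow_atTop_nhds_zero_of_norm_lt_one hq).const_mul z).norm
  rw [← tsum_ite_eq (0 : ℕ) fun _ => (1 : ℂ)]
  refine tendsto_tsum_of_dominated_convergence
    ((summable_pow_mul_pow_choose_two (norm_nonneg q) hq ‖z‖).mul_left C) (fun k => ?_)
    (.of_forall fun m k => (hbound m k).trans ?_)
  · rcases k with _ | k
    · simp [vwpTerm, vwpWeight, vwpFactor, qpn_zero]
    · rw [if_neg k.succ_ne_zero]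
      refine squeeze_zero_norm (fun m => hbound m (k + 1)) ?_
      simpa using ((harg.pow (k + 1)).mul_const (‖q‖ ^ (k + 1).choose 2)).const_mul C
  · gcongr
    exact norm_mul_pow_le hq z m

/-- The nonterminating very-well-poised `₆φ₅` summation, with one parameter sent to infinity. -/
theorem hasSum_vwpTerm (hq : ‖q‖ < 1)
    (hD : ∀ n, qpn q (z * D) n ≠ 0) (hE : ∀ n, qpn q (z * E) n ≠ 0) :
    HasSum (vwpTerm q D E z)
      (qp q (z * D * E) * qp q z / (qp q (z * D) * qp q (z * E))) := by
  have hprod := (((tendsto_qpn hq (z * D * E)).mul (tendsto_qpn hq z)).div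
    ((tendsto_qpn hq (z * D)).mul (tendsto_qpn hq (z * E)))
    (mul_ne_zero (qp_ne_zero hq hD) (qp_ne_zero hq hE))).mul
    (tendsto_tsum_vwpTerm_mul_pow hq hD hE)
  rw [mul_one] at hprod
  convert (summable_vwpTerm hq hD hE).hasSum using 1
  exact tendsto_nhds_unique hprod (tendsto_const_nhds.congr
    (tsum_vwpTerm_eq_mul_tsum_vwpTerm_mul_pow hq hD hE))

end VeryWellPoised

theorem hasSum_sum_antidiagonal {A M : Type*} [AddMonoid A] [HasAntidiagonal A]
    [AddCommMonoid M] [TopologicalSpace M] [ContinuousAdd M] [RegularSpace M]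
    {F : A × A → M} {s : M} (hF : HasSum F s) :
    HasSum (fun n => ∑ p ∈ antidiagonal n, F p) s := by
  refine (HasAntidiagonal.sigmaAntidiagonalEquivProd.hasSum_iff.mpr hF).sigma fun n => ?_
  rw [← sum_coe_sort]
  exact hasSum_fintype _

/-- The sequence `α` of the Bailey pair `(α, β)` relative to `a`, obtained from `β` by inverting
`β n = ∑ r ≤ n, α r / ((q; q)_(n - r) * (a * q; q)_(n + r))`. The summation index is
`p = (j, n - j)`, where `j` is the argument of `β`. -/
noncomputable def baileyAlpha (q a : ℂ) (β : ℕ → ℂ) (n : ℕ) : ℂ :=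
  vwpFactor q (q * a) n * ∑ p ∈ antidiagonal n,
    (-1) ^ p.2 * q ^ p.2.choose 2 * qpn q (a * q ^ n) p.1 * β p.1 / qpn q q p.2

/-- The double series behind Bailey's lemma: summing over `j + k = n` gives the `α` side, summing
over `k` first gives the `β` side. -/
noncomputable def baileyTerm (q d e z : ℂ) (β : ℕ → ℂ) (j k : ℕ) : ℂ :=
  qpn q d j * qpn q e j * z ^ j * β j *
    (qpn q (z * d * e) (2 * j) / (qpn q (z * d) j * qpn q (z * e) j) *
      vwpTerm q (d * q ^ j) (e * q ^ j) z k)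

section Bailey

variable {q a d e z : ℂ} {β : ℕ → ℂ}

theorem sum_antidiagonal_baileyTerm (haz : q * a = z * d * e) (n : ℕ) :
    ∑ p ∈ antidiagonal n, baileyTerm q d e z β p.1 p.2 =
      qpn q d n * qpn q e n / (qpn q (z * d) n * qpn q (z * e) n) * z ^ n *
        baileyAlpha q a β n := by
  rw [baileyAlpha, mul_sum, mul_sum]
  refine sum_congr rfl fun ⟨j, k⟩ hp => ?_
  obtain rfl := mem_antidiagonal.mp hp
  have hfactor := vwpFactor_add_mul_qpn q a j k
  rw [haz] at hfactor ⊢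
  calc _ = qpn q d (j + k) * qpn q e (j + k) / (qpn q (z * d) (j + k) * qpn q (z * e) (j + k)) *
        z ^ (j + k) * ((-1) ^ k * q ^ k.choose 2 * β j / qpn q q k) *
        (qpn q (z * d * e) (2 * j) * vwpFactor q (z * d * e * q ^ (2 * j)) k) := by
        rw [baileyTerm, vwpTerm, vwpWeight, qpn_add q d, qpn_add q e, qpn_add q (z * d),
          qpn_add q (z * e), show z * (d * q ^ j) * (e * q ^ j) = z * d * e * q ^ (2 * j) by ring,
          ← mul_assoc z d, ← mul_assoc z e, neg_pow z]
        ring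
    _ = _ := by rw [← hfactor]; ring

theorem hasSum_baileyTerm_right (hq : ‖q‖ < 1) (hd : ∀ n, qpn q (z * d) n ≠ 0)
    (he : ∀ n, qpn q (z * e) n ≠ 0) (j : ℕ) :
    HasSum (baileyTerm q d e z β j)
      (qp q (z * d * e) * qp q z / (qp q (z * d) * qp q (z * e)) *
        (qpn q d j * qpn q e j * z ^ j * β j)) := by
  have hinner := hasSum_vwpTerm (z := z) (D := d * q ^ j) (E := e * q ^ j) hq
    (by simpa only [mul_assoc] using qpn_mul_pow_ne_zero hd j)
    (by simpa only [mul_assoc] using qpn_mul_pow_ne_zero he j)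
  rw [show z * (d * q ^ j) * (e * q ^ j) = z * d * e * q ^ (2 * j) by ring, ← mul_assoc z d,
    ← mul_assoc z e] at hinner
  rw [qp_eq_qpn_mul_qp hq (z * d * e) (2 * j), qp_eq_qpn_mul_qp hq (z * d) j,
    qp_eq_qpn_mul_qp hq (z * e) j]
  refine ((hinner.summable.mul_left _).mul_left _).hasSum_iff.mpr ?_
  simp only [tsum_mul_left, hinner.tsum_eq]
  ring

theorem summable_baileyTerm (hq : ‖q‖ < 1) (hd : ∀ n, qpn q (z * d) n ≠ 0)
    (he : ∀ n, qpn q (z * e) n ≠ 0)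
    (hβ : Summable fun j => qpn q d j * qpn q e j * z ^ j * β j) :
    Summable fun p : ℕ × ℕ => baileyTerm q d e z β p.1 p.2 := by
  obtain ⟨C, hC0, hC⟩ := exists_norm_vwpTerm_le hq hd he
  obtain ⟨Cd, hCd0, hCd⟩ := exists_norm_inv_qpn_mul_pow_le hq hd
  obtain ⟨Ce, -, hCe⟩ := exists_norm_inv_qpn_mul_pow_le hq he
  obtain ⟨M, hM⟩ : ∃ M, ∀ j,
      ‖qpn q (z * d * e) (2 * j) / (qpn q (z * d) j * qpn q (z * e) j)‖ ≤ M := by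
    refine ⟨Real.exp (‖z * d * e‖ * (1 - ‖q‖)⁻¹) * (Cd * Ce), fun j => ?_⟩
    rw [div_eq_mul_inv, mul_inv, norm_mul, norm_mul]
    gcongr
    · exact norm_qpn_le hq _ _
    · simpa using hCd 0 j
    · simpa using hCe 0 j
  have hM0 : 0 ≤ M := (norm_nonneg _).trans (hM 0)
  have hgauss := (summable_pow_mul_pow_choose_two (norm_nonneg q) hq ‖z‖).mul_left (M * C)
  refine .of_norm_bounded (hβ.norm.mul_of_nonneg hgauss (fun _ => norm_nonneg _)
    fun k => by positivity) fun p => ?_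
  rw [baileyTerm, norm_mul, norm_mul _ (vwpTerm _ _ _ _ _), mul_assoc M]
  gcongr
  · exact hM p.1
  · simpa using hC p.1 0 p.2

/-- Bailey's lemma. -/
theorem hasSum_baileyAlpha (hq : ‖q‖ < 1) (haz : q * a = z * d * e)
    (hd : ∀ n, qpn q (z * d) n ≠ 0) (he : ∀ n, qpn q (z * e) n ≠ 0)
    (hβ : Summable fun j => qpn q d j * qpn q e j * z ^ j * β j) :
    HasSum (fun n => qpn q d n * qpn q e n / (qpn q (z * d) n * qpn q (z * e) n) * z ^ n *
        baileyAlpha q a β n)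
      (qp q (q * a) * qp q z / (qp q (z * d) * qp q (z * e)) *
        ∑' j, qpn q d j * qpn q e j * z ^ j * β j) := by
  have hsum := (summable_baileyTerm hq hd he hβ).hasSum
  have hrows := hsum.prod_fiberwise (hasSum_baileyTerm_right hq hd he)
  rw [hrows.unique (hβ.hasSum.mul_left _), ← haz] at hsum
  simpa only [sum_antidiagonal_baileyTerm haz] using hasSum_sum_antidiagonal hsum

end Bailey

/-- The sequence `β` whose Bailey partner `α` is evaluated by the `q`-Pfaff–Saalschütz formula. -/
noncomputable def saalschutzBeta (q a b c : ℂ) (m : ℕ) : ℂ :=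
  qpn q (q * a / (b * c)) m / (qpn q q m * qpn q (q * a / b) m * qpn q (q * a / c) m)

section SaalschutzPair

variable {q a b c : ℂ}

theorem saalschutzTerm_eq_mul_saalschutzBeta (hq : ∀ n, qpn q q n ≠ 0) (hqa : q * a ≠ 0)
    (hb : b ≠ 0) (hc : c ≠ 0) (hbn : ∀ n, qpn q (q * a / b) n ≠ 0)
    (hcn : ∀ n, qpn q (q * a / c) n ≠ 0) (j k : ℕ) :
    saalschutzTerm q (a * q ^ (j + k)) (q * a / (b * c)) (c / (a * q ^ (j + k))) j k =
      qpn q q (j + k) * qpn q (q * a / b) (j + k) * qpn q (q * a / c) (j + k) *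
        (c / (a * q ^ (j + k))) ^ (j + k) *
        ((-1) ^ k * q ^ k.choose 2 * qpn q (a * q ^ (j + k)) j * saalschutzBeta q a b c j /
          qpn q q k) := by
  have hq0 := left_ne_zero_of_mul hqa
  have ha0 := right_ne_zero_of_mul hqa
  have hj := hq j
  have hk := hq k
  have hbj := hbn j
  have hcj := hcn j
  have hrev := qpn_reverse (x := c / (a * q ^ (j + k))) (y := q * a / c * q ^ j) (n := k) hq0
    (by rw [pow_add]; field_simp)
  have harg : a * q ^ (j + k) * (q * a / (b * c)) * (c / (a * q ^ (j + k))) = q * a / b := by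
    field_simp
  rw [saalschutzTerm, saalschutzBeta, harg, hrev, qpn_add q (q * a / b),
    qpn_add q (q * a / c), neg_pow, pow_add (c / (a * q ^ (j + k))) j k]
  generalize qpn q (q * a / b) j = Pb, qpn q (q * a / c) j = Pc at *
  field_simp

theorem baileyAlpha_saalschutzBeta (hq : ∀ n, qpn q q n ≠ 0) (hqa : q * a ≠ 0)
    (hb : b ≠ 0) (hc : c ≠ 0) (hbn : ∀ n, qpn q (q * a / b) n ≠ 0)
    (hcn : ∀ n, qpn q (q * a / c) n ≠ 0) (n : ℕ) :
    baileyAlpha q a (saalschutzBeta q a b c) n =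
      vwpFactor q (q * a) n *
        (qpn q b n * qpn q c n / (qpn q q n * qpn q (q * a / b) n * qpn q (q * a / c) n) *
          ((-(q * a / (b * c))) ^ n * q ^ n.choose 2)) := by
  have hq0 := left_ne_zero_of_mul hqa
  have ha0 := right_ne_zero_of_mul hqa
  have haq : a * q ^ n ≠ 0 := mul_ne_zero ha0 (pow_ne_zero n hq0)
  set x := c / (a * q ^ n)
  have hx : x ≠ 0 := div_ne_zero hc haq
  have hsum := sum_saalschutzTerm hq (a * q ^ n) (q * a / (b * c)) x n
  have hAx : a * q ^ n * x = c := mul_div_cancel₀ c haq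
  have hrev := qpn_reverse (x := q * a / (b * c) * x) (y := b) (n := n) hq0
    (by simp only [x]; field_simp)
  have hterms : ∑ p ∈ antidiagonal n, saalschutzTerm q (a * q ^ n) (q * a / (b * c)) x p.1 p.2 =
      qpn q q n * qpn q (q * a / b) n * qpn q (q * a / c) n * x ^ n *
        ∑ p ∈ antidiagonal n, (-1) ^ p.2 * q ^ p.2.choose 2 * qpn q (a * q ^ n) p.1 *
          saalschutzBeta q a b c p.1 / qpn q q p.2 := by
    rw [mul_sum]
    refine sum_congr rfl fun p hp => ?_
    obtain rfl := mem_antidiagonal.mp hp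
    exact saalschutzTerm_eq_mul_saalschutzBeta hq hqa hb hc hbn hcn p.1 p.2
  have hden : qpn q q n * qpn q (q * a / b) n * qpn q (q * a / c) n ≠ 0 :=
    mul_ne_zero (mul_ne_zero (hq n) (hbn n)) (hcn n)
  rw [baileyAlpha]
  congr 1
  refine mul_left_cancel₀ (mul_ne_zero hden (pow_ne_zero n hx)) ?_
  rw [← hterms, hsum, hAx, hrev, ← neg_mul, mul_pow, mul_mul_mul_comm, mul_div_cancel₀ _ hden]
  ring

theorem vwp_summand_eq_mul_baileyAlpha (hq : ‖q‖ < 1) (ha1 : a ≠ 1) (hb : b ≠ 0)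
    (hc : c ≠ 0) (hbn : ∀ n, qpn q (q * a / b) n ≠ 0) (hcn : ∀ n, qpn q (q * a / c) n ≠ 0)
    (d e : ℂ) (n : ℕ) :
    (1 - a * q ^ (2 * n)) / (1 - a) *
        ((qpn q a n * qpn q b n * qpn q c n * qpn q d n * qpn q e n) /
          (qpn q q n * qpn q (q * a / b) n * qpn q (q * a / c) n * qpn q (q * a / d) n *
            qpn q (q * a / e) n)) *
        (-(q ^ 2 * a ^ 2 / (b * c * d * e))) ^ n * q ^ Nat.choose n 2 =
      qpn q d n * qpn q e n / (qpn q (q * a / e) n * qpn q (q * a / d) n) *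
        (q * a / (d * e)) ^ n * baileyAlpha q a (saalschutzBeta q a b c) n := by
  have ha1' : 1 - a ≠ 0 := sub_ne_zero.mpr ha1.symm
  rcases eq_or_ne (q * a) 0 with hqa | hqa
  · have hqa2 : q ^ 2 * a ^ 2 = 0 := by rw [← mul_pow, hqa, zero_pow two_ne_zero]
    rcases n with _ | n
    · simp [baileyAlpha, saalschutzBeta, vwpFactor, qpn_zero, ha1']
    · simp [hqa, hqa2]
  have hfactor : vwpFactor q (q * a) n = (1 - a * q ^ (2 * n)) / (1 - a) * qpn q a n := by
    rw [div_mul_eq_mul_div, eq_div_iff ha1', mul_comm, one_sub_mul_vwpFactor]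
  have hpow : (-(q ^ 2 * a ^ 2 / (b * c * d * e))) ^ n =
      (q * a / (d * e)) ^ n * (-(q * a / (b * c))) ^ n := by ring
  rw [baileyAlpha_saalschutzBeta (qpn_self_ne_zero hq) hqa hb hc hbn hcn, hfactor, hpow]
  ring

end SaalschutzPair

end

/-- The very-well-poised series transformation (Gasper–Rahman, Exercise 2.22). -/
theorem vwp_transformation (q a b c d e : ℂ) (hq : ‖q‖ < 1)
    (ha1 : a ≠ 1) (hbcde : b * c * d * e ≠ 0)
    (hden : ∀ n : ℕ, qpn q (q * a / b) n ≠ 0 ∧ qpn q (q * a / c) n ≠ 0 ∧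
      qpn q (q * a / d) n ≠ 0 ∧ qpn q (q * a / e) n ≠ 0)
    (hden' : qp q (q * a / d) ≠ 0 ∧ qp q (q * a / e) ≠ 0)
    (hsum1 : Summable fun n : ℕ =>
      (1 - a * q ^ (2 * n)) / (1 - a) *
        ((qpn q a n * qpn q b n * qpn q c n * qpn q d n * qpn q e n) /
          (qpn q q n * qpn q (q * a / b) n * qpn q (q * a / c) n * qpn q (q * a / d) n *
            qpn q (q * a / e) n)) *
        (-(q ^ 2 * a ^ 2 / (b * c * d * e))) ^ n * q ^ Nat.choose n 2)
    (hsum2 : Summable fun m : ℕ =>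
      (qpn q (q * a / (b * c)) m * qpn q d m * qpn q e m) /
        (qpn q q m * qpn q (q * a / b) m * qpn q (q * a / c) m) * (q * a / (d * e)) ^ m) :
    (∑' n : ℕ,
        (1 - a * q ^ (2 * n)) / (1 - a) *
          ((qpn q a n * qpn q b n * qpn q c n * qpn q d n * qpn q e n) /
            (qpn q q n * qpn q (q * a / b) n * qpn q (q * a / c) n * qpn q (q * a / d) n *
              qpn q (q * a / e) n)) *
          (-(q ^ 2 * a ^ 2 / (b * c * d * e))) ^ n * q ^ Nat.choose n 2)
      = qp q (q * a) * qp q (q * a / (d * e)) / (qp q (q * a / d) * qp q (q * a / e)) *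
        ∑' m : ℕ,
          (qpn q (q * a / (b * c)) m * qpn q d m * qpn q e m) /
            (qpn q q m * qpn q (q * a / b) m * qpn q (q * a / c) m) *
          (q * a / (d * e)) ^ m := by
  obtain ⟨⟨⟨hb, hc⟩, hd⟩, he⟩ := by simpa only [mul_ne_zero_iff] using hbcde
  have hzd : q * a / (d * e) * d = q * a / e := by field_simp
  have hze : q * a / (d * e) * e = q * a / d := by field_simp
  have haz : q * a = q * a / (d * e) * d * e := by field_simp
  simp only [vwp_summand_eq_mul_baileyAlpha hq ha1 hb hc (fun n => (hden n).1)
    (fun n => (hden n).2.1)]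
  have hsummand (m : ℕ) : (qpn q (q * a / (b * c)) m * qpn q d m * qpn q e m) /
        (qpn q q m * qpn q (q * a / b) m * qpn q (q * a / c) m) * (q * a / (d * e)) ^ m =
      qpn q d m * qpn q e m * (q * a / (d * e)) ^ m * saalschutzBeta q a b c m := by
    rw [saalschutzBeta]
    ring
  simp only [hsummand] at hsum2 ⊢
  have hbailey := hasSum_baileyAlpha hq haz (fun n => hzd ▸ (hden n).2.2.2)
    (fun n => hze ▸ (hden n).2.2.1) hsum2
  rw [hzd, hze, mul_comm (qp q (q * a / e))] at hbailey
  exact hbailey.tsum_eq
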